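/- arXiv:math/0512558 — 3 statements merged into one kernel-verified Lean document; each statement's English description precedes it below -/
import Mathlib

section
/- Let A be a finite-dimensional left-symmetric algebra over 𝕜, where 𝕜 = ℝ or 𝕜 = ℂ. Then the following conditions are equivalent: (a) R(x) is nilpotent for all x ∈ A; (b) det(id + R(x)) = 1 for all x ∈ A; (c) det(id + R(x)) ≠ 0 for all x ∈ A; (d) Tr R(x) = 0 for all x ∈ A. -/
open Polynomial in
/-- **Jacobi's formula** for matrices of polynomials. -/
theorem Matrix.derivative_det_eq_trace {R n : Type*} [CommRing R] [Fintype n] [DecidableEq n]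
    (G : Matrix n n R[X]) :
    derivative G.det = (G.adjugate * G.map derivative).trace := by
  have hcol (i : n) : (G.adjugate * G.map derivative) i i =
      (G.updateCol i fun j => derivative (G j i)).det := by
    rw [← Matrix.cramer_apply, Matrix.cramer_eq_adjugate_mulVec]
    rfl
  simp only [Matrix.trace, Matrix.diag_apply, hcol, Matrix.det_apply, derivative_sum]
  rw [Finset.sum_comm]
  refine Finset.sum_congr rfl fun σ _ => ?_
  rw [← Finset.smul_sum, Units.smul_def, Units.smul_def, derivative_smul, derivative_prod_finset]
  congr 1
  refine Finset.sum_congr rfl fun i _ => ?_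
  rw [← Finset.mul_prod_erase _ _ (Finset.mem_univ i), mul_comm]
  congr 1
  · simp
  · refine Finset.prod_congr rfl fun j hj => ?_
    simp [Matrix.updateCol_ne (Finset.ne_of_mem_erase hj)]

/-- An endomorphism `φ` is nilpotent if and only if `det (1 + s φ) = 1` for all scalars `s`. -/
theorem LinearMap.isNilpotent_iff_forall_det_id_add_smul {K V : Type*} [Field K] [Infinite K]
    [AddCommGroup V] [Module K V] [FiniteDimensional K V] (φ : V →ₗ[K] V) :
    IsNilpotent φ ↔ ∀ s : K, LinearMap.det (LinearMap.id + s • φ) = 1 := by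
  have hscale (t : K) (ht : t ≠ 0) : φ.charpoly.eval t =
      t ^ Module.finrank K V * LinearMap.det (LinearMap.id + (-t⁻¹) • φ) := by
    rw [LinearMap.eval_charpoly, ← LinearMap.det_smul]
    congr 1
    rw [Module.algebraMap_end_eq_smul_id, smul_add, smul_smul, mul_neg, mul_inv_cancel₀ ht,
      neg_one_smul, sub_eq_add_neg]
  rw [LinearMap.isNilpotent_iff_charpoly]
  constructor
  · intro h s
    rcases eq_or_ne s 0 with rfl | hs
    · simp
    have ht : -s⁻¹ ≠ 0 := neg_ne_zero.mpr (inv_ne_zero hs)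
    have := hscale _ ht
    rw [h, Polynomial.eval_pow, Polynomial.eval_X, inv_neg, neg_neg, inv_inv] at this
    exact mul_left_cancel₀ (pow_ne_zero _ ht) (this.symm.trans (mul_one _).symm)
  · intro h
    refine Polynomial.eq_of_infinite_eval_eq _ _
      ((Set.finite_singleton (0 : K)).infinite_compl.mono fun t ht => ?_)
    rw [Set.mem_ofPred_eq, hscale t ht, h, mul_one, Polynomial.eval_pow, Polynomial.eval_X]

namespace LeftSymmetric

variable {K A : Type*} [Field K] [AddCommGroup A] [Module K A]
  {mul : A →ₗ[K] A →ₗ[K] A}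

/-- The commutator relation of left and right multiplications in a left-symmetric algebra. -/
theorem flip_add_mul
    (hls : ∀ x y z : A,
      mul x (mul y z) - mul (mul x y) z = mul y (mul x z) - mul (mul y x) z) (a x : A) :
    mul.flip (a + mul a x) = (LinearMap.id + mul.flip x) ∘ₗ mul.flip a +
      mul a ∘ₗ (LinearMap.id + mul.flip x) - (LinearMap.id + mul.flip x) ∘ₗ mul a := by
  ext z
  have := hls a z x
  simp only [LinearMap.flip_apply, LinearMap.add_apply, LinearMap.sub_apply, LinearMap.comp_apply,
    LinearMap.id_apply, map_add]
  rw [← sub_eq_zero, ← neg_eq_zero, ← sub_eq_zero.mpr this]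
  abel

open Polynomial in
/-- Along a polynomial curve `x(t)`, the function `det (1 + R(x(t)))` is a polynomial, and its
logarithmic derivative is `Tr R(a)` wherever `x'(t) = a + a · x(t)`. -/
theorem exists_polynomial_det_along_curve [FiniteDimensional K A]
    (hls : ∀ x y z : A,
      mul x (mul y z) - mul (mul x y) z = mul y (mul x z) - mul (mul y x) z)
    (m : ℕ) (x : ℕ → A) :
    ∃ f : K[X], ∀ t : K,
      f.eval t = LinearMap.det
        (LinearMap.id + mul.flip (∑ k ∈ Finset.range m, t ^ k • x k)) ∧
      ∀ a : A, a + mul a (∑ k ∈ Finset.range m, t ^ k • x k) =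
          ∑ k ∈ Finset.range m, (k * t ^ (k - 1)) • x k →
        f.derivative.eval t = LinearMap.trace K A (mul.flip a) * f.eval t := by
  classical
  let b := Module.finBasis K A
  let T := LinearMap.toMatrix b b
  let G : Matrix _ _ K[X] :=
    1 + ∑ k ∈ Finset.range m, (X ^ k : K[X]) • (T (mul.flip (x k))).map C
  have hG (t : K) : G.map (eval t) =
      T (LinearMap.id + mul.flip (∑ k ∈ Finset.range m, t ^ k • x k)) := by
    ext i j
    simp [G, T, Matrix.sum_apply, eval_finsetSum, Matrix.one_apply,
      apply_ite (eval t), mul_comm (_ ^ _)]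
  have hG' (t : K) : (G.map derivative).map (eval t) =
      T (mul.flip (∑ k ∈ Finset.range m, (k * t ^ (k - 1)) • x k)) := by
    ext i j
    simp [G, T, Matrix.sum_apply, eval_finsetSum, Matrix.one_apply,
      apply_ite derivative, derivative_X_pow, mul_comm (LinearMap.toMatrix b b _ i j)]
  have hdet (t : K) : G.det.eval t = (G.map (eval t)).det := by
    simpa using! (evalRingHom t).map_det G
  refine ⟨G.det, fun t => ⟨?_, fun a ha => ?_⟩⟩
  · rw [hdet, hG, LinearMap.det_toMatrix]
  have htr : (derivative G.det).eval t =
      ((G.map (eval t)).adjugate * (G.map derivative).map (eval t)).trace := by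
    rw [Matrix.derivative_det_eq_trace]
    have h := (evalRingHom t).map_adjugate G
    simp only [RingHom.mapMatrix_apply, coe_evalRingHom] at h
    rw [← h, ← coe_evalRingHom, ← Matrix.map_mul]
    exact AddMonoidHom.map_trace (evalRingHom t) (G.adjugate * G.map derivative)
  rw [htr, hG', ← ha, flip_add_mul hls, hdet, hG, LinearMap.trace_eq_matrix_trace K b]
  simp only [T, map_sub, map_add (LinearMap.toMatrix b b) (_ ∘ₗ _), LinearMap.toMatrix_comp b b b]
  rw [mul_sub, mul_add, Matrix.trace_sub, Matrix.trace_add, ← mul_assoc, ← mul_assoc, ← mul_assoc,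
    Matrix.adjugate_mul, Matrix.trace_mul_comm (_ * _) (LinearMap.toMatrix b b (_ + _)),
    ← mul_assoc, Matrix.mul_adjugate]
  simp [mul_comm]

/-- If `1 + R(x)` is always invertible, then every `R(a)` is traceless. -/
theorem trace_flip_eq_zero_of_forall_det_ne_zero [CharZero K] [FiniteDimensional K A]
    (hls : ∀ x y z : A,
      mul x (mul y z) - mul (mul x y) z = mul y (mul x z) - mul (mul y x) z)
    (h : ∀ x : A, LinearMap.det (LinearMap.id + mul.flip x) ≠ 0) (a : A) :
    LinearMap.trace K A (mul.flip a) = 0 := by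
  -- The Fitting decomposition of `mul a` gives a polynomial integral curve of `x ↦ a + a · x`.
  obtain ⟨N, y, a₀, hN, hy⟩ : ∃ (N : ℕ) (y a₀ : A), (mul a ^ N) a₀ = 0 ∧ a₀ + mul a y = a := by
    obtain ⟨N, hN⟩ := Filter.eventually_atTop.mp
      (LinearMap.eventually_isCompl_ker_pow_range_pow (mul a))
    have ha : a ∈ LinearMap.ker (mul a ^ (N + 1)) ⊔ LinearMap.range (mul a ^ (N + 1)) := by
      rw [(hN (N + 1) N.le_succ).sup_eq_top]
      trivial
    obtain ⟨a₀, ha₀, _, ⟨y, rfl⟩, hy⟩ := Submodule.mem_sup.mp ha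
    exact ⟨N + 1, (mul a ^ N) y, a₀, ha₀, by rwa [pow_succ'] at hy⟩
  let x : ℕ → A := fun k => Nat.casesOn k (-y) fun j => ((j + 1).factorial : K)⁻¹ • (mul a ^ j) a₀
  have hx₀ : x 0 = -y := rfl
  have hx (j : ℕ) : x (j + 1) = ((j + 1).factorial : K)⁻¹ • (mul a ^ j) a₀ := rfl
  obtain ⟨f, hf⟩ := exists_polynomial_det_along_curve hls (N + 1) x
  have hcurve (t : K) : a + mul a (∑ k ∈ Finset.range (N + 1), t ^ k • x k) =
      ∑ k ∈ Finset.range (N + 1), (k * t ^ (k - 1)) • x k := by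
    have hl : a + mul a (∑ k ∈ Finset.range (N + 1), t ^ k • x k) =
        ∑ k ∈ Finset.range (N + 1), (t ^ k * (k.factorial : K)⁻¹) • (mul a ^ k) a₀ := by
      rw [Finset.sum_range_succ', Finset.sum_range_succ']
      simp only [hx₀, hx, map_add, map_sum, map_smul, map_neg, smul_smul, pow_zero, one_smul,
        pow_succ' (mul a), Module.End.mul_apply, Module.End.one_apply, Nat.factorial_zero,
        Nat.cast_one, inv_one, mul_one]
      rw [add_left_comm, ← sub_eq_add_neg, sub_eq_of_eq_add hy.symm]
    rw [hl, Finset.sum_range_succ, hN, smul_zero, add_zero, Finset.sum_range_succ']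
    simp only [hx, Nat.cast_zero, zero_mul, zero_smul, add_zero, smul_smul]
    refine Finset.sum_congr rfl fun k _ => ?_
    congr 1
    have : (k.factorial : K) ≠ 0 := Nat.cast_ne_zero.mpr k.factorial_ne_zero
    have : ((k : K) + 1) ≠ 0 := Nat.cast_add_one_ne_zero k
    rw [Nat.factorial_succ]
    push_cast
    field_simp
  have hf' : f.derivative = Polynomial.C (LinearMap.trace K A (mul.flip a)) * f :=
    Polynomial.funext fun t => by
      rw [(hf t).2 a (hcurve t), Polynomial.eval_mul, Polynomial.eval_C]
  by_contra hτ
  have hf₀ : f ≠ 0 := by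
    rintro rfl
    exact h _ ((hf 0).1.symm.trans Polynomial.eval_zero)
  have hlt := Polynomial.degree_derivative_lt hf₀
  rw [hf', Polynomial.degree_C_mul hτ] at hlt
  exact lt_irrefl _ hlt

/-- If every `R(x)` is traceless, then `det (1 + R(x)) = 1` for all `x`. -/
theorem det_id_add_flip_eq_one_of_forall_trace_eq_zero [CharZero K] [FiniteDimensional K A]
    (hls : ∀ x y z : A,
      mul x (mul y z) - mul (mul x y) z = mul y (mul x z) - mul (mul y x) z)
    (h : ∀ x : A, LinearMap.trace K A (mul.flip x) = 0) (x : A) :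
    LinearMap.det (LinearMap.id + mul.flip x) = 1 := by
  obtain ⟨f, hf⟩ := exists_polynomial_det_along_curve hls 2 fun k => if k = 0 then 0 else x
  simp only [Finset.sum_range_succ, Finset.range_zero, Finset.sum_empty, if_true, smul_zero,
    zero_add, one_ne_zero, if_false, pow_one, Nat.cast_one, Nat.sub_self, pow_zero, mul_one,
    one_smul] at hf
  have hzero : f * f.derivative = 0 := Polynomial.funext fun t => by
    rw [Polynomial.eval_mul, Polynomial.eval_zero]
    by_cases ht : f.eval t = 0
    · rw [ht, zero_mul]
    have hu : IsUnit (LinearMap.det (LinearMap.id + mul.flip (t • x))) := by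
      rw [← (hf t).1]
      exact isUnit_iff_ne_zero.mpr ht
    obtain ⟨a, ha⟩ := ((Module.End.isUnit_iff _).mp
      ((LinearMap.isUnit_iff_isUnit_det _).mpr hu)).surjective x
    rw [(hf t).2 a ha, h, zero_mul, mul_zero]
  have h₀ : f.eval 0 = 1 := by simp [(hf 0).1]
  have hf₀ : f ≠ 0 := by
    rintro rfl
    simp at h₀
  have hconst := Polynomial.eq_C_of_derivative_eq_zero ((mul_eq_zero.mp hzero).resolve_left hf₀)
  have h₁ := (hf 1).1
  rw [one_smul] at h₁
  rw [← h₁, ← h₀, hconst, Polynomial.eval_C, Polynomial.eval_C]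

end LeftSymmetric

/-- Completeness criteria for a finite-dimensional left-symmetric algebra over `ℝ` or `ℂ`:
(a) every `R(x)` is nilpotent; (b) `det(id + R(x)) = 1` always;
(c) `det(id + R(x)) ≠ 0` always; (d) `Tr R(x) = 0` always. -/
theorem leftSymmetric_completeness_criteria (𝕜 : Type*) [RCLike 𝕜] (A : Type*)
    [AddCommGroup A] [Module 𝕜 A] [FiniteDimensional 𝕜 A]
    (mul : A →ₗ[𝕜] A →ₗ[𝕜] A)
    (hls : ∀ x y z : A,
      mul x (mul y z) - mul (mul x y) z = mul y (mul x z) - mul (mul y x) z) :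
    List.TFAE
      [∀ x : A, IsNilpotent (mul.flip x),
       ∀ x : A, LinearMap.det (LinearMap.id + mul.flip x) = 1,
       ∀ x : A, LinearMap.det (LinearMap.id + mul.flip x) ≠ 0,
       ∀ x : A, LinearMap.trace 𝕜 A (mul.flip x) = 0] := by
  tfae_have 1 → 2 := fun h x => by
    simpa using (LinearMap.isNilpotent_iff_forall_det_id_add_smul (mul.flip x)).mp (h x) 1
  tfae_have 2 → 1 := fun h x =>
    (LinearMap.isNilpotent_iff_forall_det_id_add_smul (mul.flip x)).mpr fun s => by
      rw [← map_smul, h]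
  tfae_have 2 → 3 := fun h x => by
    rw [h]
    exact one_ne_zero
  tfae_have 3 → 4 := LeftSymmetric.trace_flip_eq_zero_of_forall_det_ne_zero hls
  tfae_have 4 → 2 := LeftSymmetric.det_id_add_flip_eq_one_of_forall_trace_eq_zero hls
  tfae_finish
end

section
/- Let A be a finite-dimensional complete left-symmetric algebra over ℂ. Then there exists a Cartan subalgebra H of the commutator Lie algebra of A such that the root decomposition is canonical for H, i.e., for every function χ : H → ℂ one has ⋂_{x∈H} maxGenEigenspace(L(x), χ(x)) = ⋂_{x∈H} maxGenEigenspace(ad(x), χ(x)) as subspaces of A. -/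
open NormedSpace Topology

namespace NormedSpace

variable {V : Type*} [NormedAddCommGroup V] [NormedSpace ℂ V] [CompleteSpace V]

theorem hasSum_exp_apply (T : V →L[ℂ] V) (v : V) :
    HasSum (fun n : ℕ => ((n.factorial : ℂ)⁻¹) • (T ^ n) v) (exp T v) := by
  simpa using (exp_series_hasSum_exp' (𝕂 := ℂ) T).mapL (ContinuousLinearMap.apply ℂ V v)

theorem exp_apply_mem_of_isClosed {S : Submodule ℂ V} (hS : IsClosed (S : Set V))
    {T : V →L[ℂ] V} (hT : ∀ v ∈ S, T v ∈ S) {v : V} (hv : v ∈ S) : exp T v ∈ S := by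
  have hpow : ∀ n : ℕ, (T ^ n) v ∈ S := by
    intro n
    induction n with
    | zero => simpa using hv
    | succ n ih => rw [pow_succ']; exact hT _ ih
  exact hS.mem_of_tendsto (hasSum_exp_apply T v)
    (Filter.Eventually.of_forall fun s => S.sum_mem fun n _ => S.smul_mem _ (hpow n))

theorem map_exp_apply_of_comp_eq_zero {W : Type*} [NormedAddCommGroup W] [NormedSpace ℂ W]
    (f : V →L[ℂ] W) {T : V →L[ℂ] V} (hT : ∀ v, f (T v) = 0) (v : V) : f (exp T v) = f v := by
  have h := (hasSum_exp_apply T v).mapL f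
  refine h.unique ?_
  convert hasSum_single (f := fun n : ℕ => f (((n.factorial : ℂ)⁻¹) • (T ^ n) v)) 0 ?_ using 1
  · simp
  · intro n hn
    obtain ⟨m, rfl⟩ := Nat.exists_eq_succ_of_ne_zero hn
    simp [pow_succ', hT]

variable {B : Type*} [NormedRing B] [NormedAlgebra ℂ B] [CompleteSpace B]

theorem exp_mul_apply (a b : B) : exp (ContinuousLinearMap.mul ℂ B a) b = exp a * b := by
  have hpow : ∀ n : ℕ, (ContinuousLinearMap.mul ℂ B a ^ n) b = a ^ n * b := by
    intro n
    induction n with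
    | zero => simp
    | succ n ih => simp [pow_succ', ih, mul_assoc]
  refine (hasSum_exp_apply _ b).unique ?_
  simpa [hpow] using (exp_series_hasSum_exp' (𝕂 := ℂ) a).mul_right b

theorem exp_flip_mul_apply (a b : B) :
    exp ((ContinuousLinearMap.mul ℂ B).flip a) b = b * exp a := by
  have hpow : ∀ n : ℕ, ((ContinuousLinearMap.mul ℂ B).flip a ^ n) b = b * a ^ n := by
    intro n
    induction n with
    | zero => simp
    | succ n ih => rw [pow_succ' (_ : B →L[ℂ] B), pow_succ a]; simp [ih, mul_assoc]
  refine (hasSum_exp_apply _ b).unique ?_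
  simpa [hpow] using (exp_series_hasSum_exp' (𝕂 := ℂ) a).mul_left b

theorem exp_mul_mul_exp_neg_mem {S : Submodule ℂ B} (hS : IsClosed (S : Set B)) {a b : B}
    (ha : ∀ c ∈ S, a * c - c * a ∈ S) (hb : b ∈ S) : exp a * b * exp (-a) ∈ S := by
  have hcomm : Commute (ContinuousLinearMap.mul ℂ B a)
      ((ContinuousLinearMap.mul ℂ B).flip (-a)) := by
    ext c; simp [mul_assoc]
  have hmem := exp_apply_mem_of_isClosed hS (T := ContinuousLinearMap.mul ℂ B a +
    (ContinuousLinearMap.mul ℂ B).flip (-a))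
    (fun c hc => by simpa [sub_eq_add_neg] using ha c hc) hb
  let : NormedAlgebra ℚ (B →L[ℂ] B) := .restrictScalars ℚ ℂ _
  rw [exp_add_of_commute hcomm] at hmem
  change exp (ContinuousLinearMap.mul ℂ B a)
    (exp ((ContinuousLinearMap.mul ℂ B).flip (-a)) b) ∈ S at hmem
  rwa [exp_flip_mul_apply, exp_mul_apply, ← mul_assoc] at hmem

theorem exp_mul_exp_neg (a : B) : exp a * exp (-a) = 1 := by
  let : NormedAlgebra ℚ B := .restrictScalars ℚ ℂ _
  rw [← exp_add_of_commute (Commute.refl a).neg_right, add_neg_cancel, exp_zero]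

end NormedSpace

/-- The affine representation `x ↦ (L(x), x)` of a left-symmetric algebra `A`, realised linearly on
`A × ℂ`. -/
noncomputable def affineRep {A : Type*} [AddCommGroup A] [Module ℂ A] (mul : A →ₗ[ℂ] A →ₗ[ℂ] A) :
    A →ₗ[ℂ] Module.End ℂ (A × ℂ) :=
  LinearMap.mk₂ ℂ (fun x v => (mul x v.1 + v.2 • x, (0 : ℂ)))
    (fun x y v => by simp [add_add_add_comm])
    (fun c x v => by simp [smul_comm c])
    (fun x v w => by simp [add_smul, add_add_add_comm])
    (fun c x v => by simp [mul_smul])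

namespace affineRep

section Basic

variable {A : Type*} [AddCommGroup A] [Module ℂ A] (mul : A →ₗ[ℂ] A →ₗ[ℂ] A)

@[simp]
theorem apply_apply (x : A) (v : A × ℂ) : affineRep mul x v = (mul x v.1 + v.2 • x, 0) := rfl

theorem injective : Function.Injective (affineRep mul) := fun x y h => by
  simpa using LinearMap.congr_fun h (0, 1)

variable {mul}

theorem commutator (hls : ∀ x y z : A,
      mul x (mul y z) - mul (mul x y) z = mul y (mul x z) - mul (mul y x) z) (x y : A) :
    affineRep mul x * affineRep mul y - affineRep mul y * affineRep mul x =
      affineRep mul (mul x y - mul y x) := by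
  refine LinearMap.ext fun v => Prod.ext ?_ (by simp)
  simp only [LinearMap.sub_apply, Module.End.mul_apply, apply_apply, map_add, map_smul, map_sub,
    Prod.fst_sub, zero_smul, add_zero]
  linear_combination (norm := module) hls x y v.1

theorem surjective_fst_apply (hcomplete : ∀ x : A, IsNilpotent (mul.flip x)) (p : A) :
    Function.Surjective fun x => (affineRep mul x (p, 1)).1 := by
  have h := (Module.End.isUnit_iff _).mp (hcomplete p).isUnit_add_one
  simpa using! h.surjective

theorem injective_fst_apply (hcomplete : ∀ x : A, IsNilpotent (mul.flip x)) (p : A) :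
    Function.Injective fun x => (affineRep mul x (p, 1)).1 := by
  have h := (Module.End.isUnit_iff _).mp (hcomplete p).isUnit_add_one
  simpa using! h.injective

end Basic

section Transitive

variable {E : Type*} [NormedAddCommGroup E] [NormedSpace ℂ E] [FiniteDimensional ℂ E]

/-- The affine representation with values in continuous linear maps. -/
noncomputable def toCLM (mul : E →ₗ[ℂ] E →ₗ[ℂ] E) : E →ₗ[ℂ] (E × ℂ) →L[ℂ] (E × ℂ) :=
  (LinearMap.toContinuousLinearMap :
    ((E × ℂ) →ₗ[ℂ] (E × ℂ)) ≃ₗ[ℂ] _).toLinearMap ∘ₗ affineRep mul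

@[simp]
theorem toCLM_apply (mul : E →ₗ[ℂ] E →ₗ[ℂ] E) (x : E) (v : E × ℂ) :
    toCLM mul x v = affineRep mul x v := rfl

variable {mul : E →ₗ[ℂ] E →ₗ[ℂ] E}

theorem toCLM_commutator (hls : ∀ x y z : E,
      mul x (mul y z) - mul (mul x y) z = mul y (mul x z) - mul (mul y x) z) (x y : E) :
    toCLM mul x * toCLM mul y - toCLM mul y * toCLM mul x = toCLM mul (mul x y - mul y x) := by
  refine ContinuousLinearMap.ext fun v => ?_
  exact LinearMap.congr_fun (commutator hls x y) v

theorem exp_mul_toCLM_mul_exp_neg (hls : ∀ x y z : E,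
      mul x (mul y z) - mul (mul x y) z = mul y (mul x z) - mul (mul y x) z) (x y : E) :
    ∃ z, exp (toCLM mul x) * toCLM mul y * exp (-toCLM mul x) = toCLM mul z := by
  have h : exp (toCLM mul x) * toCLM mul y * exp (-toCLM mul x) ∈ LinearMap.range (toCLM mul) := by
    refine exp_mul_mul_exp_neg_mem (Submodule.closed_of_finiteDimensional _) ?_ ⟨y, rfl⟩
    rintro _ ⟨z, rfl⟩
    exact ⟨_, (toCLM_commutator hls x z).symm⟩
  obtain ⟨z, hz⟩ := h
  exact ⟨z, hz.symm⟩

theorem map_nhds_exp (hcomplete : ∀ x : E, IsNilpotent (mul.flip x)) (p : E) :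
    Filter.map (fun x => (exp (toCLM mul x) (p, 1)).1) (𝓝 0) = 𝓝 p := by
  let Φ : ((E × ℂ) →L[ℂ] (E × ℂ)) →L[ℂ] E :=
    (ContinuousLinearMap.fst ℂ E ℂ).comp (ContinuousLinearMap.apply ℂ (E × ℂ) (p, 1))
  let ρ : E →L[ℂ] (E × ℂ) →L[ℂ] (E × ℂ) := LinearMap.toContinuousLinearMap (toCLM mul)
  have hexp : HasStrictFDerivAt exp (1 : ((E × ℂ) →L[ℂ] (E × ℂ)) →L[ℂ] _) (ρ 0) := by
    rw [map_zero]; exact hasStrictFDerivAt_exp_zero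
  have hF : HasStrictFDerivAt (fun x => Φ (exp (ρ x))) (Φ.comp ((1 : _ →L[ℂ] _).comp ρ)) 0 :=
    Φ.hasStrictFDerivAt.comp 0 (hexp.comp 0 ρ.hasStrictFDerivAt)
  have h := hF.map_nhds_eq_of_surj
    (LinearMap.range_eq_top.mpr (surjective_fst_apply hcomplete p))
  simpa [Φ, ρ] using! h

/-- The normalizer of the affine representation acts transitively on the affine hyperplane
`A × {1}`. -/
theorem exists_normalizer_map (hls : ∀ x y z : E,
      mul x (mul y z) - mul (mul x y) z = mul y (mul x z) - mul (mul y x) z)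
    (hcomplete : ∀ x : E, IsNilpotent (mul.flip x)) (p q : E) :
    ∃ g : ((E × ℂ) →L[ℂ] (E × ℂ))ˣ,
      (∀ x, ∃ y, g * toCLM mul x * (g⁻¹ : _ˣ) = toCLM mul y) ∧
      (∀ x, ∃ y, (g⁻¹ : _ˣ) * toCLM mul x * g = toCLM mul y) ∧
      (g : (E × ℂ) →L[ℂ] (E × ℂ)) (p, 1) = (q, 1) := by
  let P : E → E → Prop := fun p q => ∃ g : ((E × ℂ) →L[ℂ] (E × ℂ))ˣ,
      (∀ x, ∃ y, g * toCLM mul x * (g⁻¹ : _ˣ) = toCLM mul y) ∧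
      (∀ x, ∃ y, (g⁻¹ : _ˣ) * toCLM mul x * g = toCLM mul y) ∧
      (g : (E × ℂ) →L[ℂ] (E × ℂ)) (p, 1) = (q, 1)
  have hsymm : Std.Symm P := by
    refine ⟨?_⟩
    rintro p q ⟨g, h₁, h₂, h₃⟩
    refine ⟨g⁻¹, h₂, by simpa using h₁, ?_⟩
    rw [← h₃, ← mul_apply_eq_comp, Units.inv_mul, one_apply_eq_self]
  have htrans : IsTrans E P := by
    refine ⟨?_⟩
    rintro p q r ⟨g, h₁, h₂, h₃⟩ ⟨g', h₁', h₂', h₃'⟩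
    refine ⟨g' * g, fun x => ?_, fun x => ?_, ?_⟩
    · obtain ⟨y, hy⟩ := h₁ x
      obtain ⟨z, hz⟩ := h₁' y
      exact ⟨z, by rw [← hz, ← hy]; simp [mul_assoc]⟩
    · obtain ⟨y, hy⟩ := h₂' x
      obtain ⟨z, hz⟩ := h₂ y
      exact ⟨z, by rw [← hz, ← hy]; simp [mul_assoc]⟩
    · rw [Units.val_mul, mul_apply_eq_comp, h₃, h₃']
  refine PreconnectedSpace.induction₂ P (fun p => ?_) htrans p q
  rw [← map_nhds_exp hcomplete p, Filter.eventually_map]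
  refine Filter.Eventually.of_forall fun x => ?_
  refine ⟨⟨exp (toCLM mul x), exp (-toCLM mul x), exp_mul_exp_neg _, ?_⟩,
    fun y => ?_, fun y => ?_, ?_⟩
  · simpa using exp_mul_exp_neg (-toCLM mul x)
  · exact exp_mul_toCLM_mul_exp_neg hls x y
  · simpa using exp_mul_toCLM_mul_exp_neg hls (-x) y
  · refine Prod.ext rfl ?_
    exact map_exp_apply_of_comp_eq_zero (ContinuousLinearMap.snd ℂ E ℂ) (T := toCLM mul x)
      (fun _ => rfl) (p, 1)

end Transitive

section Lie

attribute [local instance] LieRing.ofAssociativeRing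

variable {A : Type*} [LieRing A] [LieAlgebra ℂ A] {mul : A →ₗ[ℂ] A →ₗ[ℂ] A}

/-- The affine representation as a homomorphism of Lie algebras. -/
noncomputable def lieHom (hbr : ∀ x y : A, ⁅x, y⁆ = mul x y - mul y x)
    (hls : ∀ x y z : A,
      mul x (mul y z) - mul (mul x y) z = mul y (mul x z) - mul (mul y x) z) :
    A →ₗ⁅ℂ⁆ Module.End ℂ (A × ℂ) :=
  ⟨affineRep mul, fun {x y} => by
    change affineRep mul ⁅x, y⁆ = ⁅affineRep mul x, affineRep mul y⁆
    rw [hbr, ← commutator hls, LieRing.of_associative_ring_bracket]⟩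

theorem apply_mem_maxGenEigenspace (hbr : ∀ x y : A, ⁅x, y⁆ = mul x y - mul y x)
    (hls : ∀ x y z : A,
      mul x (mul y z) - mul (mul x y) z = mul y (mul x z) - mul (mul y x) z)
    {c d : ℂ} {x y : A} {v : A × ℂ}
    (hx : x ∈ (LieAlgebra.ad ℂ A y).maxGenEigenspace c)
    (hv : v ∈ (affineRep mul y).maxGenEigenspace d) :
    affineRep mul x v ∈ (affineRep mul y).maxGenEigenspace (c + d) := by
  let : LieRingModule A (A × ℂ) := LieRingModule.compLieHom _ (lieHom hbr hls)
  let : LieModule ℂ A (A × ℂ) := LieModule.compLieHom _ (lieHom hbr hls)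
  exact LieModule.lie_mem_maxGenEigenspace_toEnd hx hv

theorem mk_zero_mem_maxGenEigenspace_iff {c : ℂ} {y a : A} :
    (a, (0 : ℂ)) ∈ (affineRep mul y).maxGenEigenspace c ↔
      a ∈ Module.End.maxGenEigenspace (mul y) c := by
  have hpow : ∀ n : ℕ, ((affineRep mul y - c • 1) ^ n) (a, 0) = (((mul y - c • 1) ^ n) a, 0) := by
    intro n
    induction n with
    | zero => simp
    | succ n ih => simp [pow_succ', ih]
  simp [Module.End.mem_maxGenEigenspace, hpow]

theorem mem_maxGenEigenspace_zero_of_apply_mem {y : A} {v : A × ℂ}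
    (h : affineRep mul y v ∈ (affineRep mul y).maxGenEigenspace 0) :
    v ∈ (affineRep mul y).maxGenEigenspace 0 := by
  rw [Module.End.mem_maxGenEigenspace] at h ⊢
  obtain ⟨n, hn⟩ := h
  refine ⟨n + 1, ?_⟩
  rw [zero_smul, sub_zero] at hn ⊢
  rw [pow_succ, Module.End.mul_apply, hn]

theorem exists_mk_one_mem_maxGenEigenspace_zero [FiniteDimensional ℂ A] {U : Submodule ℂ A}
    {h : A} (hh : h ∈ U) (hU : ∀ u ∈ U, mul h u ∈ U) :
    ∃ p ∈ U, (p, (1 : ℂ)) ∈ (affineRep mul h).maxGenEigenspace 0 := by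
  let f : Module.End ℂ U := (mul h).restrict hU
  obtain ⟨n, hn, hpos⟩ :=
    (f.eventually_codisjoint_ker_pow_range_pow.and (Filter.eventually_ge_atTop 1)).exists
  obtain ⟨m, rfl⟩ := Nat.exists_eq_add_of_le' hpos
  obtain ⟨k, hk, _, ⟨r, rfl⟩, hkr⟩ :=
    Submodule.mem_sup.mp (hn.eq_top ▸ Submodule.mem_top : (⟨h, hh⟩ : U) ∈ _)
  have hpow : ∀ (i : ℕ) (u : U), ((f ^ i) u : A) = (mul h ^ i) u := by
    intro i u
    induction i with
    | zero => simp
    | succ i ih => simp [pow_succ', ← ih, f]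
  refine ⟨-((f ^ m) r : U), U.neg_mem (Subtype.prop _), mem_maxGenEigenspace_zero_of_apply_mem ?_⟩
  have hk' : affineRep mul h (-((f ^ m) r : A), 1) = ((k : A), 0) := by
    have := congrArg (Subtype.val) hkr
    refine Prod.ext ?_ rfl
    simp only [Submodule.coe_add, pow_succ', Module.End.mul_apply] at this
    simp only [apply_apply, map_neg, one_smul]
    rw [neg_add_eq_iff_eq_add, add_comm]
    exact this.symm
  rw [hk', mk_zero_mem_maxGenEigenspace_iff, Module.End.mem_maxGenEigenspace]
  refine ⟨m + 1, ?_⟩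
  rw [zero_smul, sub_zero, ← hpow, LinearMap.mem_ker.mp hk, Submodule.coe_zero]

variable [FiniteDimensional ℂ A]

theorem maxGenEigenspace_ad_eq (hbr : ∀ x y : A, ⁅x, y⁆ = mul x y - mul y x)
    (hls : ∀ x y z : A,
      mul x (mul y z) - mul (mul x y) z = mul y (mul x z) - mul (mul y x) z)
    {y : A} (hy : ((0 : A), (1 : ℂ)) ∈ (affineRep mul y).maxGenEigenspace 0) (c : ℂ) :
    (LieAlgebra.ad ℂ A y).maxGenEigenspace c = Module.End.maxGenEigenspace (mul y) c := by
  refine congrFun (((Module.End.independent_maxGenEigenspace (mul y)).le_iff_eq_of_iSup_eq_top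
    (Module.End.iSup_maxGenEigenspace_eq_top (LieAlgebra.ad ℂ A y))).mp fun c x hx => ?_) c
  have h := apply_mem_maxGenEigenspace hbr hls hx hy
  rw [add_zero] at h
  rw [← mk_zero_mem_maxGenEigenspace_iff]
  simpa using h

theorem zero_one_mem_of_mem_engel (hbr : ∀ x y : A, ⁅x, y⁆ = mul x y - mul y x)
    (hls : ∀ x y z : A,
      mul x (mul y z) - mul (mul x y) z = mul y (mul x z) - mul (mul y x) z)
    (hcomplete : ∀ x : A, IsNilpotent (mul.flip x))
    {y : A} (hy : ((0 : A), (1 : ℂ)) ∈ (affineRep mul y).maxGenEigenspace 0)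
    (hnil : ∀ h ∈ LieSubalgebra.engel ℂ y,
      LieSubalgebra.engel ℂ y ≤ LieSubalgebra.engel ℂ h)
    {h : A} (hh : h ∈ LieSubalgebra.engel ℂ y) :
    ((0 : A), (1 : ℂ)) ∈ (affineRep mul h).maxGenEigenspace 0 := by
  let U : Submodule ℂ A := (LieSubalgebra.engel ℂ y).toSubmodule
  have hU : U = Module.End.maxGenEigenspace (mul y) 0 := maxGenEigenspace_ad_eq hbr hls hy 0
  have hmul : ∀ x ∈ U, ∀ u ∈ U, mul x u ∈ U := by
    intro x hx u hu
    rw [hU, ← mk_zero_mem_maxGenEigenspace_iff] at hu ⊢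
    simpa using apply_mem_maxGenEigenspace hbr hls (c := 0) hx hu
  obtain ⟨p, hpU, hp⟩ := exists_mk_one_mem_maxGenEigenspace_zero (U := U) hh (hmul h hh)
  have hle : U ≤ Module.End.maxGenEigenspace (mul h) 0 := by
    let T : A →ₗ[ℂ] A := mul.flip p + 1
    have hT : ∀ x ∈ U, T x ∈ U := fun x hx => U.add_mem (hmul x hx p hpU) hx
    have hTinj : Function.Injective T := by
      simpa using! injective_fst_apply hcomplete p
    have hTsurj : Function.Surjective (T.restrict hT) :=
      LinearMap.surjective_of_injective fun a b hab =>
        Subtype.ext (hTinj (congrArg Subtype.val hab))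
    intro u hu
    obtain ⟨x, hx⟩ := hTsurj ⟨u, hu⟩
    have hxu : mul x p + (x : A) = u := congrArg Subtype.val hx
    have := apply_mem_maxGenEigenspace hbr hls (c := 0) (hnil h hh x.2) hp
    rw [← mk_zero_mem_maxGenEigenspace_iff]
    simpa [hxu] using this
  apply mem_maxGenEigenspace_zero_of_apply_mem
  have happly : affineRep mul h (0, 1) = (h, 0) := by simp
  rw [happly]
  exact mk_zero_mem_maxGenEigenspace_iff.mpr (hle hh)

/-- An element of the normalizer of the affine representation induces a Lie automorphism. -/
theorem exists_lieEquiv (hbr : ∀ x y : A, ⁅x, y⁆ = mul x y - mul y x)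
    (hls : ∀ x y z : A,
      mul x (mul y z) - mul (mul x y) z = mul y (mul x z) - mul (mul y x) z)
    (g : (A × ℂ) ≃ₗ[ℂ] (A × ℂ))
    (hg : ∀ x, ∃ y, g.conj (affineRep mul x) = affineRep mul y) :
    ∃ φ : A ≃ₗ⁅ℂ⁆ A, ∀ x, g.conj (affineRep mul x) = affineRep mul (φ x) := by
  choose f hf using hg
  let φ : A →ₗ⁅ℂ⁆ A :=
    { toFun := f
      map_add' := fun x y => injective mul (by simp [← hf])
      map_smul' := fun c x => injective mul (by simp [← hf])
      map_lie' := fun {x y} => (injective mul) (by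
        have h : ∀ x y, affineRep mul ⁅x, y⁆ = ⁅affineRep mul x, affineRep mul y⁆ :=
          fun x y => (lieHom hbr hls).map_lie x y
        rw [← hf, h, h, ← hf, ← hf]
        exact g.lieConj.map_lie _ _) }
  have hinj : Function.Injective φ := fun x y hxy => by
    apply injective mul
    apply g.conj.injective
    rw [hf, hf]
    exact congrArg _ hxy
  have hbij : Function.Bijective φ :=
    ⟨hinj, LinearMap.surjective_of_injective (f := (φ : A →ₗ[ℂ] A)) hinj⟩
  exact ⟨LieEquiv.ofBijective φ hbij, hf⟩

end Lie

section AddCommGroup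

variable {A : Type*} [AddCommGroup A] [Module ℂ A] [FiniteDimensional ℂ A]
  {mul : A →ₗ[ℂ] A →ₗ[ℂ] A}

theorem exists_normalizer_linearEquiv_map (hls : ∀ x y z : A,
      mul x (mul y z) - mul (mul x y) z = mul y (mul x z) - mul (mul y x) z)
    (hcomplete : ∀ x : A, IsNilpotent (mul.flip x)) (p q : A) :
    ∃ g : (A × ℂ) ≃ₗ[ℂ] (A × ℂ),
      (∀ x, ∃ y, g.conj (affineRep mul x) = affineRep mul y) ∧ g (p, 1) = (q, 1) := by
  let e := (Module.finBasis ℂ A).equivFun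
  let : NormedAddCommGroup A := NormedAddCommGroup.induced A _ e e.injective
  let : NormedSpace ℂ A := NormedSpace.induced ℂ A _ e
  obtain ⟨g, h₁, -, h₃⟩ := exists_normalizer_map hls hcomplete p q
  refine ⟨(ContinuousLinearEquiv.ofUnit g).toLinearEquiv, fun x => ?_, h₃⟩
  obtain ⟨y, hy⟩ := h₁ x
  exact ⟨y, LinearMap.ext fun v => DFunLike.congr_fun hy v⟩

end AddCommGroup

end affineRep

theorem LieAlgebra.IsRegular.map_lieEquiv {A : Type*} [LieRing A] [LieAlgebra ℂ A]
    [FiniteDimensional ℂ A] {x : A} (hx : LieAlgebra.IsRegular ℂ x) (φ : A ≃ₗ⁅ℂ⁆ A) :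
    LieAlgebra.IsRegular ℂ (φ x) := by
  rw [LieAlgebra.isRegular_def] at hx ⊢
  rwa [← LieAlgebra.conj_ad_apply, LinearEquiv.charpoly_conj]

theorem LieAlgebra.IsRegular.engel_le {A : Type*} [LieRing A] [LieAlgebra ℂ A]
    [FiniteDimensional ℂ A] {x : A} (hx : LieAlgebra.IsRegular ℂ x) {y : A}
    (hy : y ∈ LieSubalgebra.engel ℂ x) :
    LieSubalgebra.engel ℂ x ≤ LieSubalgebra.engel ℂ y := by
  let Ex : {LieSubalgebra.engel ℂ z | z ∈ LieSubalgebra.engel ℂ x} :=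
    ⟨LieSubalgebra.engel ℂ x, x, LieSubalgebra.self_mem_engel _ _, rfl⟩
  suffices IsBot Ex from @this ⟨LieSubalgebra.engel ℂ y, y, hy, rfl⟩
  have hcard : (Module.finrank ℂ A : Cardinal) ≤ Cardinal.mk ℂ :=
    Cardinal.natCast_le_aleph0.trans (Cardinal.infinite_iff.mp inferInstance)
  apply LieAlgebra.engel_isBot_of_isMin hcard (LieSubalgebra.engel ℂ x) Ex le_rfl
  rintro ⟨_, z, hz, rfl⟩ hzx
  have hrank : Module.finrank ℂ (LieSubalgebra.engel ℂ x) ≤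
      Module.finrank ℂ (LieSubalgebra.engel ℂ z) := by
    rw [(LieAlgebra.isRegular_iff_finrank_engel_eq_rank ℂ x).mp hx]
    exact LieAlgebra.rank_le_finrank_engel ℂ z
  suffices LieSubalgebra.engel ℂ z = LieSubalgebra.engel ℂ x from this.ge
  exact LieSubalgebra.toSubmodule_injective (Submodule.eq_of_le_of_finrank_le hzx hrank)

/-- Every finite-dimensional complete left-symmetric algebra over `ℂ` admits a canonical
decomposition: there is a Cartan subalgebra `H` of the commutator Lie algebra such that
the root decompositions for `L` and `ad` coincide. -/
theorem leftSymmetric_complete_canonical_decomposition (A : Type*)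
    [LieRing A] [LieAlgebra ℂ A] [FiniteDimensional ℂ A]
    (mul : A →ₗ[ℂ] A →ₗ[ℂ] A)
    (hbr : ∀ x y : A, ⁅x, y⁆ = mul x y - mul y x)
    (hls : ∀ x y z : A,
      mul x (mul y z) - mul (mul x y) z = mul y (mul x z) - mul (mul y x) z)
    (hcomplete : ∀ x : A, IsNilpotent (mul.flip x)) :
    ∃ H : LieSubalgebra ℂ A, H.IsCartanSubalgebra ∧
      ∀ χ : H → ℂ,
        (⨅ x : H, Module.End.maxGenEigenspace (mul (x : A)) (χ x)) =
          ⨅ x : H, Module.End.maxGenEigenspace (mul (x : A) - mul.flip (x : A)) (χ x) := by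
  obtain ⟨y₀, hy₀⟩ := LieAlgebra.exists_isRegular ℂ A
  obtain ⟨p, -, hp⟩ := affineRep.exists_mk_one_mem_maxGenEigenspace_zero (mul := mul)
    (U := ⊤) (Submodule.mem_top (x := y₀)) (fun _ _ => Submodule.mem_top)
  obtain ⟨g, hg, hgp⟩ := affineRep.exists_normalizer_linearEquiv_map hls hcomplete p 0
  obtain ⟨φ, hφ⟩ := affineRep.exists_lieEquiv hbr hls g hg
  have hreg : LieAlgebra.IsRegular ℂ (φ y₀) := hy₀.map_lieEquiv φ
  have hy : ((0 : A), (1 : ℂ)) ∈ (affineRep mul (φ y₀)).maxGenEigenspace 0 := by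
    rw [Module.End.mem_maxGenEigenspace, zero_smul, sub_zero] at hp ⊢
    obtain ⟨n, hn⟩ := hp
    have hpow : ∀ k : ℕ, (affineRep mul (φ y₀) ^ k) (g (p, 1)) =
        g ((affineRep mul y₀ ^ k) (p, 1)) := by
      intro k
      induction k with
      | zero => rfl
      | succ k ih =>
        rw [pow_succ', pow_succ', Module.End.mul_apply, ih, ← hφ, LinearEquiv.conj_apply_apply,
          g.symm_apply_apply, Module.End.mul_apply]
    exact ⟨n, by rw [← hgp, hpow, hn, map_zero]⟩
  have hnil : ∀ h ∈ LieSubalgebra.engel ℂ (φ y₀),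
      LieSubalgebra.engel ℂ (φ y₀) ≤ LieSubalgebra.engel ℂ h := fun h hh => hreg.engel_le hh
  refine ⟨LieSubalgebra.engel ℂ (φ y₀),
    ⟨LieSubalgebra.isNilpotent_of_forall_le_engel _ hnil, LieSubalgebra.normalizer_engel _ _⟩,
    fun χ => iInf_congr fun x => ?_⟩
  have had : mul (x : A) - mul.flip (x : A) = LieAlgebra.ad ℂ A (x : A) :=
    LinearMap.ext fun z => (hbr x z).symm
  rw [had, affineRep.maxGenEigenspace_ad_eq hbr hls
    (affineRep.zero_one_mem_of_mem_engel hbr hls hcomplete hy hnil x.2)]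
end

section
/- Let A be a finite-dimensional complete left-symmetric algebra over ℂ. If H₁ and H₂ are Cartan subalgebras of the commutator Lie algebra of A for each of which the root decomposition is canonical (i.e., for i = 1,2 and every χ : Hᵢ → ℂ, ⋂_{x∈Hᵢ} maxGenEigenspace(L(x), χ(x)) = ⋂_{x∈Hᵢ} maxGenEigenspace(ad(x), χ(x))), then H₁ = H₂. In other words, the canonical decomposition of a complete left-symmetric algebra is unique. -/
section

open Module Module.End

/-- If `W ≤ M` pointwise, `M` is independent and `W` spans, then `W = M`. -/
theorem iSupIndep.eq_of_le_of_iSup_eq_top {ι R V : Type*} [Ring R] [AddCommGroup V] [Module R V]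
    {W M : ι → Submodule R V} (hM : iSupIndep M) (hle : W ≤ M) (hW : ⨆ i, W i = ⊤) : W = M := by
  refine le_antisymm hle fun i m hm ↦ ?_
  have hsup : W i ⊔ ⨆ j ≠ i, W j = ⊤ := by
    rw [eq_top_iff, ← hW]
    refine iSup_le fun j ↦ ?_
    obtain rfl | hj := eq_or_ne j i
    · exact le_sup_left
    · exact (le_iSup₂ (f := fun j (_ : j ≠ i) ↦ W j) j hj).trans le_sup_right
  obtain ⟨w, hw, w', hw', rfl⟩ := Submodule.mem_sup.mp (hsup ▸ Submodule.mem_top : m ∈ _)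
  have h₁ : w' ∈ M i := by simpa using sub_mem hm (hle i hw)
  have h₂ : w' ∈ ⨆ j ≠ i, M j := iSup₂_mono (fun j _ ↦ hle j) hw'
  have h₃ : w' = 0 := Submodule.disjoint_def.mp (hM i) w' h₁ h₂
  simpa [h₃] using hw

section Endomorphism

variable {K V₁ V₂ V₃ : Type*} [Field K] [AddCommGroup V₁] [Module K V₁]
  [AddCommGroup V₂] [Module K V₂] [AddCommGroup V₃] [Module K V₃]

theorem Module.End.mem_maxGenEigenspace_of_sub_mem {T : End K V₁} {μ : K} {v : V₁}
    (h : T v - μ • v ∈ T.maxGenEigenspace μ) : v ∈ T.maxGenEigenspace μ := by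
  rw [mem_maxGenEigenspace] at h ⊢
  obtain ⟨k, hk⟩ := h
  exact ⟨k + 1, by simpa [pow_succ] using hk⟩

/-- A bilinear map that intertwines `f ⊗ 1 + 1 ⊗ g` with `h` adds generalized eigenvalues. -/
theorem Module.End.bilin_mem_maxGenEigenspace_add {f : End K V₁} {g : End K V₂} {h : End K V₃}
    {B : V₁ →ₗ[K] V₂ →ₗ[K] V₃} (hB : ∀ a b, h (B a b) = B (f a) b + B a (g b))
    {μ ν : K} {a : V₁} {b : V₂} (ha : a ∈ f.maxGenEigenspace μ) (hb : b ∈ g.maxGenEigenspace ν) :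
    B a b ∈ h.maxGenEigenspace (μ + ν) := by
  rw [mem_maxGenEigenspace] at ha hb
  obtain ⟨i, hi⟩ := ha
  obtain ⟨j, hj⟩ := hb
  induction i generalizing a b j with
  | zero => simp_all
  | succ i ihi =>
    induction j generalizing b with
    | zero => simp_all
    | succ j ihj =>
      apply mem_maxGenEigenspace_of_sub_mem
      have key : h (B a b) - (μ + ν) • B a b =
          B ((f - μ • (1 : End K V₁)) a) b + B a ((g - ν • (1 : End K V₂)) b) := by
        simp only [hB, LinearMap.sub_apply, LinearMap.smul_apply, one_apply, map_sub, map_smul,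
          add_smul]
        abel
      rw [key]
      exact add_mem (ihi (by simpa [pow_succ] using hi) (j + 1) hj)
        (ihj (by simpa [pow_succ] using hj))

variable [FiniteDimensional K V₁]

/-- The semisimple part of an endomorphism acts on each generalized eigenspace by its eigenvalue. -/
theorem Module.End.exists_eigenspace_eq_maxGenEigenspace [IsAlgClosed K] (T : End K V₁) :
    ∃ S : End K V₁, ∀ μ, S.eigenspace μ = T.maxGenEigenspace μ := by
  obtain ⟨n, hn, s, hs, hnil, hss, hT⟩ := T.exists_isNilpotent_isSemisimple
  have hcomm : Commute T s := Algebra.commute_of_mem_adjoin_self hs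
  refine ⟨s, fun μ ↦ (congr_fun (iSupIndep.eq_of_le_of_iSup_eq_top
    s.eigenspaces_iSupIndep (fun ν v hv ↦ ?_) T.iSup_maxGenEigenspace_eq_top) μ).symm⟩
  rw [mem_eigenspace_iff]
  refine apply_eq_of_mem_of_comm_of_isFinitelySemisimple_of_isNil hv hcomm
    hss.isFinitelySemisimple ?_
  rwa [hT, add_sub_cancel_right]

/-- An endomorphism that shifts the generalized eigenvalues of `T` by `μ ≠ 0` is nilpotent. -/
theorem Module.End.isNilpotent_of_maxGenEigenspace_shift [CharZero K] [IsAlgClosed K]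
    {T S : End K V₁} {μ : K} (hμ : μ ≠ 0)
    (hS : ∀ ν, ∀ v ∈ T.maxGenEigenspace ν, S v ∈ T.maxGenEigenspace (μ + ν)) :
    IsNilpotent S := by
  rw [Module.End.isNilpotent_iff_of_finite]
  have hpow (n : ℕ) : ∀ ν, ∀ v ∈ T.maxGenEigenspace ν,
      (S ^ n) v ∈ T.maxGenEigenspace (n * μ + ν) := by
    induction n with
    | zero => simp
    | succ n ih =>
      intro ν v hv
      have := hS _ _ (ih ν v hv)
      rw [pow_succ', mul_apply]
      convert this using 2
      push_cast
      ring
  intro v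
  induction (T.iSup_maxGenEigenspace_eq_top ▸ Submodule.mem_top : v ∈ _) using
    Submodule.iSup_induction' with
  | mem ν v hv =>
    by_contra! hne
    have hfin := WellFoundedGT.finite_ne_bot_of_iSupIndep T.independent_maxGenEigenspace
    refine Set.infinite_of_injective_forall_mem (f := fun n : ℕ ↦ (n : K) * μ + ν) ?_ ?_ hfin
    · intro m n h
      simpa [hμ] using h
    · intro n hbot
      exact hne n (by simpa [hbot] using hpow n ν v hv)
  | zero => exact ⟨0, by simp⟩
  | add v w _ _ hv hw =>
    obtain ⟨i, hi⟩ := hv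
    obtain ⟨j, hj⟩ := hw
    exact ⟨i + j, by rw [map_add, pow_map_zero_of_le (Nat.le_add_right i j) hi,
      pow_map_zero_of_le (Nat.le_add_left j i) hj, add_zero]⟩

/-- The Fitting decomposition, with the invertible part written as a value of `T`. -/
theorem Module.End.exists_eq_add_apply_of_fitting (T : End K V₁) (u : V₁) :
    ∃ u₀ ∈ T.maxGenEigenspace 0, ∃ w, u = u₀ + T w ∧ (w ∈ T.maxGenEigenspace 0 → w = 0) := by
  obtain ⟨n, hn⟩ := Filter.eventually_atTop.mp T.eventually_isCompl_ker_pow_range_pow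
  set m := n + finrank K V₁
  have hm := hn m (Nat.le_add_right _ _)
  have hm' := hn (m + 1) (by lia)
  obtain ⟨u₀, hu₀, _, ⟨b, rfl⟩, rfl⟩ :=
    Submodule.mem_sup.mp (hm'.sup_eq_top ▸ Submodule.mem_top : u ∈ _)
  refine ⟨u₀, ?_, (T ^ m) b, by rw [pow_succ', mul_apply], fun hw ↦ ?_⟩
  · exact (mem_maxGenEigenspace ..).mpr ⟨m + 1, by simpa using hu₀⟩
  · refine Submodule.disjoint_def.mp hm.disjoint _ ?_ ⟨b, rfl⟩
    rw [maxGenEigenspace_eq_genEigenspace_finrank, genEigenspace_nat, zero_smul, sub_zero] at hw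
    exact pow_map_zero_of_le (Nat.le_add_left _ _) hw

end Endomorphism

section Weights

open LieModule

variable {K L M : Type*} [Field K] [LieRing L] [LieAlgebra K L]
  [LieRing.IsNilpotent L] [AddCommGroup M] [Module K M] [LieRingModule L M] [LieModule K L M]

theorem LieModule.genWeightSpace_le_maxGenEigenspace_toEnd (χ : L → K) (x : L) :
    (genWeightSpace M χ).toSubmodule ≤ (toEnd K L M x).maxGenEigenspace (χ x) :=
  genWeightSpace_le_genWeightSpaceOf M x χ

theorem LieModule.toSubmodule_genWeightSpace (χ : L → K) :
    (genWeightSpace M χ).toSubmodule = ⨅ x, (toEnd K L M x).maxGenEigenspace (χ x) := by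
  ext m
  simp [mem_genWeightSpace, mem_maxGenEigenspace]

variable [IsAlgClosed K] [FiniteDimensional K M]

/-- If an endomorphism `S` has the single generalized eigenvalue `χ x` on each weight space `M_χ`,
then its generalized eigenspaces are sums of weight spaces. -/
theorem LieModule.maxGenEigenspace_eq_iSup_genWeightSpace {S : End K M} (x : L)
    (hS : ∀ χ : Weight K L M, (genWeightSpace M χ).toSubmodule ≤ S.maxGenEigenspace (χ x)) (μ : K) :
    S.maxGenEigenspace μ =
      ⨆ (χ : Weight K L M) (_ : χ x = μ), (genWeightSpace M χ).toSubmodule := by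
  refine (congr_fun (iSupIndep.eq_of_le_of_iSup_eq_top
    (W := fun μ ↦ ⨆ (χ : Weight K L M) (_ : χ x = μ), (genWeightSpace M χ).toSubmodule)
    S.independent_maxGenEigenspace (fun ν ↦ ?_) ?_) μ).symm
  · exact iSup₂_le fun χ hχ ↦ hχ ▸ hS χ
  · rw [eq_top_iff, ← LieSubmodule.top_toSubmodule (R := K) (L := L),
      ← iSup_genWeightSpace_eq_top' K L M, LieSubmodule.iSup_toSubmodule]
    exact iSup_le fun χ ↦ le_iSup_of_le (χ x) (le_iSup₂_of_le χ rfl le_rfl)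

end Weights

section Cartan

open LieModule

variable {K L : Type*} [Field K] [LieRing L] [LieAlgebra K L]
  [FiniteDimensional K L] (H : LieSubalgebra K L) [H.IsCartanSubalgebra]

theorem LieSubalgebra.mem_iff_forall_mem_maxGenEigenspace_ad {u : L} :
    u ∈ H ↔ ∀ x ∈ H, u ∈ (LieAlgebra.ad K L x).maxGenEigenspace 0 := by
  rw [← LieSubalgebra.mem_toLieSubmodule, ← LieAlgebra.rootSpace_zero_eq K L H,
    ← LieSubmodule.mem_toSubmodule, toSubmodule_genWeightSpace]
  simp only [Submodule.mem_iInf, Subtype.forall]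
  rfl

variable [IsAlgClosed K]

theorem LieSubalgebra.maxGenEigenspace_ad_eq_iSup (x : H) (μ : K) :
    (LieAlgebra.ad K L x).maxGenEigenspace μ =
      ⨆ (χ : Weight K H L) (_ : χ x = μ), (genWeightSpace L χ).toSubmodule :=
  maxGenEigenspace_eq_iSup_genWeightSpace (S := LieAlgebra.ad K L x) x
    (fun χ ↦ genWeightSpace_le_maxGenEigenspace_toEnd χ x) μ

/-- A Cartan subalgebra contains a regular element. -/
theorem LieSubalgebra.exists_maxGenEigenspace_ad_le [CharZero K] :
    ∃ y ∈ H, (LieAlgebra.ad K L y).maxGenEigenspace 0 ≤ H.toSubmodule := by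
  obtain ⟨y, hy⟩ := Module.Dual.exists_forall_ne_zero_of_forall_exists
    (fun χ : {χ : Weight K H L // χ.IsNonZero} ↦ Weight.toLinear K H L χ.1) (fun χ ↦ by
      by_contra! h
      exact χ.2 (funext h))
  refine ⟨y, y.2, ?_⟩
  rw [H.maxGenEigenspace_ad_eq_iSup]
  refine iSup₂_le fun χ hχ ↦ ?_
  have hz : χ.IsZero := by
    by_contra h
    exact hy ⟨χ, h⟩ hχ
  rw [hz.eq]
  exact (congrArg LieSubmodule.toSubmodule (LieAlgebra.rootSpace_zero_eq K L H)).le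

end Cartan

section LeftSymmetric

open LieAlgebra LieModule

variable {K A : Type*} [Field K] [LieRing A] [LieAlgebra K A] {mul : A →ₗ[K] A →ₗ[K] A}

theorem sub_flip_eq_ad (hbr : ∀ x y : A, ⁅x, y⁆ = mul x y - mul y x) (x : A) :
    mul x - mul.flip x = ad K A x := by
  ext y
  simp [hbr]

theorem mul_mul_eq_of_leftSymmetric (hbr : ∀ x y : A, ⁅x, y⁆ = mul x y - mul y x)
    (hls : ∀ x y z : A,
      mul x (mul y z) - mul (mul x y) z = mul y (mul x z) - mul (mul y x) z) (x y z : A) :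
    mul x (mul y z) = mul (ad K A x y) z + mul y (mul x z) := by
  rw [ad_apply, hbr, map_sub, LinearMap.sub_apply]
  linear_combination (norm := module) hls x y z

variable [FiniteDimensional K A]

/-- A derivation preserves the generalized eigenspaces of `L(y)` as soon as the generalized
null spaces of `L(y)` and `ad y` coincide and contain `y`. -/
theorem derivation_mem_maxGenEigenspace (hbr : ∀ x y : A, ⁅x, y⁆ = mul x y - mul y x)
    (hls : ∀ x y z : A,
      mul x (mul y z) - mul (mul x y) z = mul y (mul x z) - mul (mul y x) z)
    {δ : End K A} (hδ : ∀ a b, δ (mul a b) = mul (δ a) b + mul a (δ b)) {y : A}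
    (hy : y ∈ maxGenEigenspace (mul y) 0)
    (heq : maxGenEigenspace (mul y) 0 = (ad K A y).maxGenEigenspace 0) {β : K} {v : A}
    (hv : v ∈ maxGenEigenspace (mul y) β) : δ v ∈ maxGenEigenspace (mul y) β := by
  have hmul := mul_mul_eq_of_leftSymmetric hbr hls
  obtain ⟨u₀, hu₀, w, hu, hw⟩ := (ad K A y).exists_eq_add_apply_of_fitting (δ y)
  let C : End K (End K A) := LinearMap.mulLeft K (mul y) - LinearMap.mulRight K (mul y)
  have hC (D : End K A) (a : A) : mul y (D a) = (C D) a + D (mul y a) := by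
    simp [C]
  have hCL (a : A) : C (mul a) = mul (ad K A y a) := by
    ext b
    rw [← add_left_inj (mul a (mul y b)), ← hC, hmul]
  have hLu₀ : mul u₀ ∈ C.maxGenEigenspace 0 := by
    rw [mem_maxGenEigenspace] at hu₀ ⊢
    obtain ⟨k, hk⟩ := hu₀
    simp only [zero_smul, sub_zero] at hk ⊢
    have hpow (k : ℕ) (a : A) : (C ^ k) (mul a) = mul ((ad K A y ^ k) a) := by
      induction k generalizing a with
      | zero => rfl
      | succ k ih => rw [pow_succ, mul_apply, hCL, ih, pow_succ, mul_apply]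
    exact ⟨k, by rw [hpow, hk, map_zero]⟩
  have hCD : C (δ + mul w) = - mul u₀ := by
    ext b
    have h₁ := hC (δ + mul w) b
    have h₂ := hδ y b
    have h₃ := hmul y w b
    rw [hu, map_add, LinearMap.add_apply] at h₂
    simp only [LinearMap.add_apply, map_add, LinearMap.neg_apply] at h₁ ⊢
    rw [h₂, h₃] at h₁
    linear_combination (norm := module) -h₁
  have hD : δ + mul w ∈ C.maxGenEigenspace 0 := by
    apply mem_maxGenEigenspace_of_sub_mem
    rw [hCD, zero_smul, sub_zero]
    exact neg_mem hLu₀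
  have hDpres {β : K} {v : A} (hv : v ∈ maxGenEigenspace (mul y) β) :
      (δ + mul w) v ∈ maxGenEigenspace (mul y) β := by
    simpa using bilin_mem_maxGenEigenspace_add (B := LinearMap.id) hC hD hv
  have hw₀ : w = 0 := by
    apply hw
    rw [← heq]
    apply mem_maxGenEigenspace_of_sub_mem
    have h : mul y w - (0 : K) • w = (δ + mul w) y - u₀ := by
      rw [LinearMap.add_apply, hu, ad_apply, hbr]
      module
    rw [h]
    exact sub_mem (hDpres hy) (heq ▸ hu₀)
  simpa [hw₀] using hDpres hv

variable [IsAlgClosed K]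

/-- If `L(y)` and `ad y` have the same generalized eigenspaces, then their semisimple part is
a derivation. -/
theorem exists_derivation_eigenspace_eq (hbr : ∀ x y : A, ⁅x, y⁆ = mul x y - mul y x)
    (hls : ∀ x y z : A,
      mul x (mul y z) - mul (mul x y) z = mul y (mul x z) - mul (mul y x) z) {y : A}
    (heq : ∀ μ, maxGenEigenspace (mul y) μ = (ad K A y).maxGenEigenspace μ) :
    ∃ δ : End K A, (∀ a b, δ (mul a b) = mul (δ a) b + mul a (δ b)) ∧
      ∀ μ, δ.eigenspace μ = (ad K A y).maxGenEigenspace μ := by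
  obtain ⟨δ, hδ⟩ := (ad K A y).exists_eigenspace_eq_maxGenEigenspace
  refine ⟨δ, fun a b ↦ ?_, hδ⟩
  have htop := (ad K A y).iSup_maxGenEigenspace_eq_top
  induction (htop ▸ Submodule.mem_top : a ∈ _) using Submodule.iSup_induction' with
  | zero => simp
  | add a a' _ _ ha ha' =>
    simp only [map_add, LinearMap.add_apply, ha, ha']
    abel
  | mem μ a ha =>
    induction (htop ▸ Submodule.mem_top : b ∈ _) using Submodule.iSup_induction' with
    | zero => simp
    | add b b' _ _ hb hb' =>
      simp only [map_add, hb, hb']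
      abel
    | mem ν b hb =>
      have hab : mul a b ∈ δ.eigenspace (μ + ν) := by
        rw [hδ, ← heq]
        exact bilin_mem_maxGenEigenspace_add (mul_mul_eq_of_leftSymmetric hbr hls y) ha
          (heq ν ▸ hb)
      rw [← hδ] at ha hb
      rw [mem_eigenspace_iff] at ha hb hab
      simp [ha, hb, hab, add_smul]

/-- A canonical root decomposition identifies the generalized eigenspaces of `L(x)` and `ad x`
for each single `x`. -/
theorem maxGenEigenspace_eq_of_canonical (H : LieSubalgebra K A) [H.IsCartanSubalgebra]
    (hcanon : ∀ χ : H → K, (⨅ x : H, maxGenEigenspace (mul (x : A)) (χ x)) =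
      ⨅ x : H, (ad K A x).maxGenEigenspace (χ x)) {x : A} (hx : x ∈ H) (μ : K) :
    maxGenEigenspace (mul x) μ = (ad K A x).maxGenEigenspace μ := by
  rw [H.maxGenEigenspace_ad_eq_iSup ⟨x, hx⟩]
  refine maxGenEigenspace_eq_iSup_genWeightSpace (⟨x, hx⟩ : H) (fun χ ↦ ?_) μ
  rw [toSubmodule_genWeightSpace]
  exact (hcanon χ).ge.trans (iInf_le _ (⟨x, hx⟩ : H))

variable [CharZero K]

/-- A Cartan subalgebra with canonical root decomposition contains every other one. -/
theorem cartan_le_of_canonical (hbr : ∀ x y : A, ⁅x, y⁆ = mul x y - mul y x)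
    (hls : ∀ x y z : A,
      mul x (mul y z) - mul (mul x y) z = mul y (mul x z) - mul (mul y x) z)
    (H₁ H₂ : LieSubalgebra K A) [H₁.IsCartanSubalgebra] [H₂.IsCartanSubalgebra]
    (h₁ : ∀ x ∈ H₁, ∀ μ, maxGenEigenspace (mul x) μ = (ad K A x).maxGenEigenspace μ)
    (h₂ : ∀ x ∈ H₂, ∀ μ, maxGenEigenspace (mul x) μ = (ad K A x).maxGenEigenspace μ) :
    H₂ ≤ H₁ := by
  obtain ⟨y, hy, hreg⟩ := H₂.exists_maxGenEigenspace_ad_le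
  obtain ⟨δ, hder, hδ⟩ := exists_derivation_eigenspace_eq hbr hls (h₂ y hy)
  have hpres : ∀ u ∈ H₁.toSubmodule, δ u ∈ H₁.toSubmodule := fun u hu ↦ by
    refine H₁.mem_iff_forall_mem_maxGenEigenspace_ad.mpr fun x hx ↦ ?_
    have hmem {v : A} (hv : v ∈ H₁) : v ∈ maxGenEigenspace (mul x) 0 := by
      rw [h₁ x hx]
      exact H₁.mem_iff_forall_mem_maxGenEigenspace_ad.mp hv x hx
    rw [← h₁ x hx]
    exact derivation_mem_maxGenEigenspace hbr hls hder (hmem hx) (h₁ x hx 0) (hmem hu)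
  have hsup : H₁.toSubmodule = ⨆ μ, H₁.toSubmodule ⊓ δ.eigenspace μ := by
    have htop : ⨆ μ, δ.eigenspace μ = ⊤ := by
      simp only [hδ, iSup_maxGenEigenspace_eq_top]
    have h := Submodule.inf_iSup_genEigenspace (f := δ) (k := 1) hpres
    rw [← h]
    exact (inf_eq_left.mpr (htop.ge.trans' le_top)).symm
  -- Modulo elements on which all weights vanish, `H₁` is contained in `H₂`.
  have hproj (x : H₁) : ∃ x₀ : H₁, (x₀ : A) ∈ H₂ ∧ ∀ χ : Weight K H₁ A, χ x = χ x₀ := by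
    suffices ∀ x : A, x ∈ H₁.toSubmodule → ∃ hx : x ∈ H₁, ∃ x₀ : H₁, (x₀ : A) ∈ H₂ ∧
        ∀ χ : Weight K H₁ A, χ ⟨x, hx⟩ = χ x₀ from (this x x.2).2
    intro x hx
    rw [hsup] at hx
    induction hx using Submodule.iSup_induction' with
    | zero => exact ⟨zero_mem _, 0, zero_mem _, fun χ ↦ rfl⟩
    | add a b _ _ ha hb =>
      obtain ⟨ha, a₀, ha₀, hχa⟩ := ha
      obtain ⟨hb, b₀, hb₀, hχb⟩ := hb
      refine ⟨add_mem ha hb, a₀ + b₀, add_mem ha₀ hb₀, fun χ ↦ ?_⟩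
      rw [map_add, ← hχa, ← hχb, ← map_add]
      rfl
    | mem μ x hx =>
      obtain ⟨hx, hxμ⟩ := hx
      rw [SetLike.mem_coe, hδ] at hxμ
      refine ⟨hx, ?_⟩
      obtain rfl | hμ := eq_or_ne μ 0
      · exact ⟨⟨x, hx⟩, hreg hxμ, fun χ ↦ rfl⟩
      · refine ⟨0, zero_mem _, fun χ ↦ ?_⟩
        rw [map_zero]
        refine χ.apply_eq_zero_of_isNilpotent _ ?_
        refine isNilpotent_of_maxGenEigenspace_shift (T := ad K A y) hμ fun ν v hv ↦ ?_
        exact bilin_mem_maxGenEigenspace_add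
          (B := (ad K A : A →ₗ[K] End K A)) (fun a b ↦ leibniz_lie y a b) hxμ hv
  intro u hu
  refine H₁.mem_iff_forall_mem_maxGenEigenspace_ad.mpr fun x hx ↦ ?_
  obtain ⟨x₀, hx₀, hχ⟩ := hproj ⟨x, hx⟩
  have h := H₂.mem_iff_forall_mem_maxGenEigenspace_ad.mp hu x₀ hx₀
  rw [H₁.maxGenEigenspace_ad_eq_iSup] at h
  rw [H₁.maxGenEigenspace_ad_eq_iSup ⟨x, hx⟩]
  simpa only [hχ] using h

end LeftSymmetric

end

/-- The canonical decomposition of a finite-dimensional complete left-symmetric algebra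
over `ℂ` is unique: two Cartan subalgebras for which the root decomposition is canonical
coincide. -/
theorem leftSymmetric_canonical_decomposition_unique (A : Type*)
    [LieRing A] [LieAlgebra ℂ A] [FiniteDimensional ℂ A]
    (mul : A →ₗ[ℂ] A →ₗ[ℂ] A)
    (hbr : ∀ x y : A, ⁅x, y⁆ = mul x y - mul y x)
    (hls : ∀ x y z : A,
      mul x (mul y z) - mul (mul x y) z = mul y (mul x z) - mul (mul y x) z)
    (hcomplete : ∀ x : A, IsNilpotent (mul.flip x))
    (H₁ H₂ : LieSubalgebra ℂ A)
    (hH₁ : H₁.IsCartanSubalgebra) (hH₂ : H₂.IsCartanSubalgebra)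
    (hcanon₁ : ∀ χ : H₁ → ℂ,
      (⨅ x : H₁, Module.End.maxGenEigenspace (mul (x : A)) (χ x)) =
        ⨅ x : H₁, Module.End.maxGenEigenspace (mul (x : A) - mul.flip (x : A)) (χ x))
    (hcanon₂ : ∀ χ : H₂ → ℂ,
      (⨅ x : H₂, Module.End.maxGenEigenspace (mul (x : A)) (χ x)) =
        ⨅ x : H₂, Module.End.maxGenEigenspace (mul (x : A) - mul.flip (x : A)) (χ x)) :
    H₁ = H₂ := by
  simp only [sub_flip_eq_ad hbr] at hcanon₁ hcanon₂
  have h₁ (x) (hx : x ∈ H₁) := maxGenEigenspace_eq_of_canonical H₁ hcanon₁ hx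
  have h₂ (x) (hx : x ∈ H₂) := maxGenEigenspace_eq_of_canonical H₂ hcanon₂ hx
  exact le_antisymm (cartan_le_of_canonical hbr hls H₂ H₁ h₂ h₁)
    (cartan_le_of_canonical hbr hls H₁ H₂ h₁ h₂)
end
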